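/- The commutator subgroup F' of Thompson's group F is a simple group. -/

import Mathlib

/-- The defining relations of Thompson's group `F`:
`xᵢ⁻¹ xₙ xᵢ xₙ₊₁⁻¹` for all natural numbers `i < n`. -/
def thompsonRels : Set (FreeGroup ℕ) :=
  {r | ∃ i n : ℕ, i < n ∧
    r = (FreeGroup.of i)⁻¹ * FreeGroup.of n * FreeGroup.of i * (FreeGroup.of (n + 1))⁻¹}

/-- Thompson's group `F`. -/
abbrev ThompsonF : Type := PresentedGroup thompsonRels

/-- The image of the `n`-th generator in Thompson's group `F`. -/
def x (n : ℕ) : ThompsonF := PresentedGroup.of n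

/-!
Higman's argument. Let `F` act on the line by piecewise linear homeomorphisms, faithfully because
every element is a quotient of two products of generators with nondecreasing indices, and such
products are determined by their action. Elements of `F'` have compact support in `(0, ∞)`. Given
`1 ≠ n ∈ N ⊴ F'`, some interval `U` is disjoint from `n • U`, and any `a, b ∈ F'` can be conjugated
within `F'` to have support in `U`. Then `n * a * n⁻¹` commutes with `b` and equals `a` modulo `N`,
so `⁅a, b⁆ ∈ N`. Hence `N` contains `F''`, which is `F'`: modulo `F''` the elements `x₁⁻¹ * x₂` and
`x₂⁻¹ * x₃` commute, which forces `x₁ = x₂ = x₃ = ⋯` there.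

An element of `F` pushing a compact interval into `U` may be taken in `F'`, because `F` is generated
by `F'` and the pointwise stabilizer of that interval.
-/

open MulAction Set
open scoped commutatorElement Pointwise

section HigmanCriterion

/-- The rigid stabilizer of `U`: the elements of `G` that move only points of `U`. -/
def rigidStabilizer (G : Type*) {α : Type*} [Group G] [MulAction G α] (U : Set α) : Subgroup G :=
  fixingSubgroup G Uᶜ

variable {G α : Type*} [Group G] [MulAction G α] {U V : Set α} {g a b n : G}

lemma mem_rigidStabilizer_iff : g ∈ rigidStabilizer G U ↔ ∀ t ∉ U, g • t = t :=
  mem_fixingSubgroup_iff G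

lemma rigidStabilizer_mono (h : U ⊆ V) : rigidStabilizer G U ≤ rigidStabilizer G V :=
  fixingSubgroup_antitone G α (Set.compl_subset_compl.mpr h)

lemma conj_mem_rigidStabilizer (g : G) (ha : a ∈ rigidStabilizer G U) :
    g * a * g⁻¹ ∈ rigidStabilizer G (g • U) :=
  Set.conj_mem_fixingSubgroup Set.smul_set_compl ha

lemma commute_of_disjoint_of_mem_rigidStabilizer [FaithfulSMul G α] (hUV : Disjoint U V)
    (ha : a ∈ rigidStabilizer G U) (hb : b ∈ rigidStabilizer G V) : Commute a b := by
  have hdisj : (toPermHom G α a).Disjoint (toPermHom G α b) := fun t ↦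
    (em (t ∈ U)).symm.imp (mem_rigidStabilizer_iff.mp ha t) fun ht ↦
      mem_rigidStabilizer_iff.mp hb t (hUV.notMem_of_mem_left ht)
  exact Commute.of_map (f := toPermHom G α) toPerm_injective hdisj.commute

lemma commutatorElement_mem_of_disjoint_smul [FaithfulSMul G α] {N : Subgroup G} [N.Normal]
    (hn : n ∈ N) (hU : Disjoint (n • U) U)
    (ha : a ∈ rigidStabilizer G U) (hb : b ∈ rigidStabilizer G U) : ⁅a, b⁆ ∈ N := by
  have hcomm : Commute (n * a * n⁻¹) b :=
    commute_of_disjoint_of_mem_rigidStabilizer hU (conj_mem_rigidStabilizer n ha) hb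
  have hquot : QuotientGroup.mk' N (n * a * n⁻¹) = QuotientGroup.mk' N a := by
    have hn' : QuotientGroup.mk' N n = 1 := (QuotientGroup.eq_one_iff n).mpr hn
    rw [map_mul, map_mul, map_inv, hn', one_mul, inv_one, mul_one]
  rw [← QuotientGroup.eq_one_iff, ← QuotientGroup.mk'_apply, map_commutatorElement, ← hquot,
    ← map_commutatorElement, hcomm.commutator_eq, map_one]

theorem isSimpleGroup_of_forall_exists_disjoint_smul [FaithfulSMul G α] [Nontrivial G]
    [Group.IsPerfect G]
    (h : ∀ n : G, n ≠ 1 → ∀ a b : G, ∃ (g : G) (U : Set α), Disjoint (n • U) U ∧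
      g * a * g⁻¹ ∈ rigidStabilizer G U ∧ g * b * g⁻¹ ∈ rigidStabilizer G U) :
    IsSimpleGroup G where
  eq_bot_or_eq_top_of_normal N hN := by
    refine or_iff_not_imp_left.mpr fun hbot ↦ ?_
    obtain ⟨n, hnN, hn⟩ := N.bot_or_exists_ne_one.resolve_left hbot
    rw [eq_top_iff, ← Group.IsPerfect.commutator_eq_top, commutator_def, Subgroup.commutator_le]
    intro a _ b _
    obtain ⟨g, U, hU, ha, hb⟩ := h n hn a b
    have hconj : g * ⁅a, b⁆ * g⁻¹ ∈ N := by
      rw [conjugate_commutatorElement]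
      exact commutatorElement_mem_of_disjoint_smul hnN hU ha hb
    simpa [mul_assoc] using hN.conj_mem _ hconj g⁻¹

lemma commutator_le_of_closure_eq_top {s : Set G} (hs : Subgroup.closure s = ⊤)
    {N : Subgroup G} [N.Normal] (h : ∀ a ∈ s, ∀ b ∈ s, ⁅a, b⁆ ∈ N) : commutator G ≤ N := by
  have hq : ∀ a ∈ QuotientGroup.mk' N '' s, ∀ b ∈ QuotientGroup.mk' N '' s, a * b = b * a := by
    rintro _ ⟨a, ha, rfl⟩ _ ⟨b, hb, rfl⟩
    rw [← commutatorElement_eq_one_iff_mul_comm, ← map_commutatorElement]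
    exact (QuotientGroup.eq_one_iff _).mpr (h a ha b hb)
  have := Subgroup.isMulCommutative_closure hq
  rw [← QuotientGroup.ker_mk' N, ← Subgroup.map_eq_bot_iff, commutator_def, Subgroup.map_commutator,
    ← hs, MonoidHom.map_closure, Subgroup.commutator_self_eq_bot_iff]
  exact this

section Order

variable [LinearOrder α] [CovariantClass G α HSMul.hSMul LT.lt]

lemma smul_Ioo (g : G) (s t : α) : g • Ioo s t = Ioo (g • s) (g • t) := by
  ext u
  rw [mem_smul_set_iff_inv_smul_mem, mem_Ioo, mem_Ioo, ← (smul_strictMono_right g).lt_iff_lt,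
    smul_inv_smul, ← (smul_strictMono_right g).lt_iff_lt (a := g⁻¹ • u), smul_inv_smul]

lemma disjoint_smul_uIoo (g : G) (t : α) : Disjoint (g • uIoo t (g • t)) (uIoo t (g • t)) := by
  rw [Set.disjoint_left]
  rcases le_total t (g • t) with h | h
  · rw [uIoo_of_le h, smul_Ioo]
    exact fun u hu hu' ↦ (hu.1.trans hu'.2).false
  · rw [uIoo_of_ge h, smul_Ioo]
    exact fun u hu hu' ↦ (hu'.1.trans hu.2).false

end Order

end HigmanCriterion

-- The relations are those between the images of `x₁, x₂, x₃, x₄` in a quotient of Thompson's group.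
lemma eq_of_commute_inv_mul_of_conj {G : Type*} [Group G] {a b c d : G} (hab : b * a = a * c)
    (hac : c * a = a * d) (hbc : c * b = b * d) (hcomm : Commute (a⁻¹ * b) (b⁻¹ * c)) :
    b = c := by
  have h : b⁻¹ * c = b⁻¹ * c * (b * c⁻¹) := calc
    b⁻¹ * c = a⁻¹ * b * (b⁻¹ * c) * (a⁻¹ * b)⁻¹ := by rw [hcomm.eq, mul_inv_cancel_right]
    _ = a⁻¹ * (c * a) * (a⁻¹ * (b * a))⁻¹ := by group
    _ = b⁻¹ * (b * d) * c⁻¹ := by rw [hac, hab]; group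
    _ = b⁻¹ * c * (b * c⁻¹) := by rw [← hbc]; group
  exact mul_inv_eq_one.mp (left_eq_mul.mp h)

namespace ThompsonF

lemma closure_range_x : Subgroup.closure (range x) = ⊤ :=
  PresentedGroup.closure_range_of thompsonRels

lemma x_mul_x {i n : ℕ} (h : i < n) : x n * x i = x i * x (n + 1) := by
  have hrel : (x i)⁻¹ * x n * x i * (x (n + 1))⁻¹ = 1 :=
    PresentedGroup.one_of_mem (rels := thompsonRels) ⟨i, n, h, rfl⟩
  rw [← mul_inv_eq_one.mp hrel]
  group

section Perfect

lemma inv_mul_succ_mem_commutator (j : ℕ) : (x (j + 1))⁻¹ * x (j + 2) ∈ commutator ThompsonF := by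
  have h : ⁅(x (j + 1))⁻¹, (x 0)⁻¹⁆ = (x (j + 1))⁻¹ * x (j + 2) := by
    rw [commutatorElement_def, inv_inv, inv_inv, mul_assoc, x_mul_x j.succ_pos]
    group
  exact h ▸ Subgroup.commutator_mem_commutator (Subgroup.mem_top _) (Subgroup.mem_top _)

lemma commutator_le_of_inv_mul_succ_mem {N : Subgroup ThompsonF} [hN : N.Normal]
    (h : ∀ j, (x (j + 1))⁻¹ * x (j + 2) ∈ N) : commutator ThompsonF ≤ N := by
  have hlt : ∀ i n, i < n → ⁅x n, x i⁆ ∈ N := by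
    intro i n hin
    obtain ⟨j, rfl⟩ := Nat.exists_eq_add_one_of_ne_zero (Nat.ne_zero_of_lt hin)
    have hconj : ⁅x (j + 1), x i⁆ = x i * (x (j + 2) * (x (j + 1))⁻¹) * (x i)⁻¹ := by
      rw [commutatorElement_def, x_mul_x hin]
      group
    rw [hconj]
    exact hN.conj_mem _ (hN.mem_comm (h j)) _
  refine commutator_le_of_closure_eq_top closure_range_x ?_
  rintro _ ⟨i, rfl⟩ _ ⟨n, rfl⟩
  rcases lt_trichotomy i n with hin | rfl | hin
  · rw [← commutatorElement_inv]
    exact inv_mem (hlt i n hin)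
  · rw [commutatorElement_self]
    exact one_mem N
  · exact hlt n i hin

lemma map_x_succ_eq {H : Type*} [Group H] (f : ThompsonF →* H)
    (hcomm : Commute (f ((x 1)⁻¹ * x 2)) (f ((x 2)⁻¹ * x 3))) (j : ℕ) :
    f (x (j + 1)) = f (x (j + 2)) := by
  have hf : ∀ {i n}, i < n → f (x n) * f (x i) = f (x i) * f (x (n + 1)) := fun h ↦ by
    rw [← map_mul, x_mul_x h, map_mul]
  have h23 : f (x 2) = f (x 3) := by
    simp only [map_mul, map_inv] at hcomm
    exact eq_of_commute_inv_mul_of_conj (hf (by lia)) (hf (by lia)) (hf (by lia)) hcomm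
  induction j with
  | zero => exact mul_right_cancel ((hf one_pos).trans (h23 ▸ (hf two_pos).symm))
  | succ j ih => exact mul_left_cancel ((hf j.succ_pos).symm.trans (ih ▸ hf (by lia)))

theorem isPerfect_commutator : Group.IsPerfect (commutator ThompsonF) := by
  refine Subgroup.isPerfect_iff.mpr (le_antisymm (Subgroup.commutator_le_self _) ?_)
  set N := ⁅commutator ThompsonF, commutator ThompsonF⁆
  have hcomm : Commute (QuotientGroup.mk' N ((x 1)⁻¹ * x 2))
      (QuotientGroup.mk' N ((x 2)⁻¹ * x 3)) := by
    rw [← commutatorElement_eq_one_iff_commute, ← map_commutatorElement]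
    exact (QuotientGroup.eq_one_iff _).mpr (Subgroup.commutator_mem_commutator
      (inv_mul_succ_mem_commutator 0) (inv_mul_succ_mem_commutator 1))
  exact commutator_le_of_inv_mul_succ_mem fun j ↦
    QuotientGroup.eq.mp (map_x_succ_eq (QuotientGroup.mk' N) hcomm j)

end Perfect

section Action

/-- The piecewise linear homeomorphism of the line by which the generator `xᵢ` acts: it fixes
`(-∞, i]`, contracts `[i, i + 2]` onto `[i, i + 1]` and translates `[i + 2, ∞)` by `-1`. The
rational line is enough, all slopes and breakpoints being rational. -/
def generatorIso (i : ℕ) : ℚ ≃o ℚ where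
  toFun t := if t ≤ i then t else if t ≤ i + 2 then (t + i) / 2 else t - 1
  invFun t := if t ≤ i then t else if t ≤ i + 1 then 2 * t - i else t + 1
  left_inv t := by
    dsimp only
    split_ifs <;> linarith
  right_inv t := by
    dsimp only
    split_ifs <;> linarith
  map_rel_iff' := by
    intro s t
    simp only [Equiv.coe_fn_mk]
    split_ifs <;> constructor <;> intro h <;> linarith

lemma generatorIso_apply (i : ℕ) (t : ℚ) :
    generatorIso i t = if t ≤ i then t else if t ≤ i + 2 then (t + i) / 2 else t - 1 :=
  rfl

lemma generatorIso_mul_generatorIso {i n : ℕ} (h : i < n) :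
    generatorIso n * generatorIso i = generatorIso i * generatorIso (n + 1) := by
  ext t
  have h' : (i : ℚ) + 1 ≤ n := by exact_mod_cast h
  simp only [RelIso.mul_apply, generatorIso_apply, Nat.cast_add, Nat.cast_one]
  split_ifs <;> linarith

/-- The representation of Thompson's group by piecewise linear homeomorphisms of the line. -/
def toOrderIso : ThompsonF →* (ℚ ≃o ℚ) :=
  PresentedGroup.toGroup (f := generatorIso) <| by
    rintro _ ⟨i, n, h, rfl⟩
    simp only [map_mul, map_inv, FreeGroup.lift_apply_of]
    rw [mul_assoc (generatorIso i)⁻¹, generatorIso_mul_generatorIso h]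
    group

/-- Thompson's group acts on the line through `ThompsonF.toOrderIso`. -/
instance : MulAction ThompsonF ℚ := MulAction.compHom ℚ toOrderIso

instance : CovariantClass ThompsonF ℚ HSMul.hSMul LT.lt :=
  ⟨fun g _ _ h ↦ (toOrderIso g).strictMono h⟩

instance : CovariantClass ThompsonF ℚ HSMul.hSMul LE.le :=
  ⟨fun g _ _ h ↦ (toOrderIso g).monotone h⟩

lemma x_smul (i : ℕ) (t : ℚ) :
    x i • t = if t ≤ i then t else if t ≤ i + 2 then (t + i) / 2 else t - 1 :=
  DFunLike.congr_fun (PresentedGroup.toGroup.of (f := generatorIso) (x := i) _) t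

lemma x_inv_smul (i : ℕ) (t : ℚ) :
    (x i)⁻¹ • t = if t ≤ i then t else if t ≤ i + 1 then 2 * t - i else t + 1 := by
  rw [inv_smul_eq_iff, x_smul]
  split_ifs <;> linarith

lemma x_smul_of_le {i : ℕ} {t : ℚ} (h : t ≤ i) : x i • t = t := by
  rw [x_smul, if_pos h]

lemma x_smul_lt {i : ℕ} {t : ℚ} (h : i < t) : x i • t < t := by
  rw [x_smul]
  split_ifs <;> linarith

lemma x_smul_le (i : ℕ) (t : ℚ) : x i • t ≤ t :=
  (le_or_gt t i).elim (fun h ↦ (x_smul_of_le h).le) fun h ↦ (x_smul_lt h).le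

lemma smul_of_nonpos (g : ThompsonF) {t : ℚ} (ht : t ≤ 0) : g • t = t := by
  have hle : Subgroup.closure (range x) ≤ stabilizer ThompsonF t := by
    rw [Subgroup.closure_le]
    rintro _ ⟨i, rfl⟩
    exact x_smul_of_le (ht.trans i.cast_nonneg)
  exact hle (closure_range_x ▸ Subgroup.mem_top g)

lemma smul_pos (g : ThompsonF) {t : ℚ} (ht : 0 < t) : 0 < g • t :=
  smul_of_nonpos g le_rfl ▸ smul_strictMono_right g ht

end Action

section Faithful

/-- The product of the generators whose indices are listed in `l`. -/
def positiveWord (l : List ℕ) : ThompsonF := (l.map x).prod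

@[simp]
lemma positiveWord_nil : positiveWord [] = 1 := rfl

@[simp]
lemma positiveWord_cons (i : ℕ) (l : List ℕ) : positiveWord (i :: l) = x i * positiveWord l :=
  List.prod_cons

lemma positiveWord_append (l m : List ℕ) :
    positiveWord (l ++ m) = positiveWord l * positiveWord m := by
  rw [positiveWord, List.map_append, List.prod_append, positiveWord, positiveWord]

lemma exists_isChain_x_mul_positiveWord {k j : ℕ} {l : List ℕ}
    (hl : (k :: l).IsChain (· ≤ ·)) (hkj : k ≤ j) :
    ∃ m, (k :: m).IsChain (· ≤ ·) ∧ positiveWord m = x j * positiveWord l := by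
  induction l generalizing k j with
  | nil => exact ⟨[j], by simpa using hkj, by simp⟩
  | cons i l ih =>
    obtain ⟨hki, hl⟩ := List.isChain_cons_cons.mp hl
    rcases le_or_gt j i with hji | hij
    · exact ⟨j :: i :: l, by simp [hkj, hji, hl], by simp⟩
    · obtain ⟨m, hm, hword⟩ := ih hl (hij.le.trans j.le_succ)
      refine ⟨i :: m, by simp [hki, hm], ?_⟩
      rw [positiveWord_cons, positiveWord_cons, hword, ← mul_assoc, ← mul_assoc, x_mul_x hij]

lemma exists_isChain_positiveWord_eq (l : List ℕ) :
    ∃ m, m.IsChain (· ≤ ·) ∧ positiveWord m = positiveWord l := by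
  suffices ∃ m, (0 :: m).IsChain (· ≤ ·) ∧ positiveWord m = positiveWord l from
    this.imp fun m hm ↦ ⟨hm.1.tail, hm.2⟩
  induction l with
  | nil => exact ⟨[], by simp⟩
  | cons j l ih =>
    obtain ⟨m, hm, hword⟩ := ih
    rw [positiveWord_cons, ← hword]
    exact exists_isChain_x_mul_positiveWord hm j.zero_le

lemma positiveWord_smul_le (l : List ℕ) (t : ℚ) : positiveWord l • t ≤ t := by
  induction l with
  | nil => simp
  | cons i l ih =>
    rw [positiveWord_cons, mul_smul]
    exact (x_smul_le i _).trans ih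

lemma positiveWord_smul_of_le {i : ℕ} {l : List ℕ} (hl : (i :: l).IsChain (· ≤ ·)) {t : ℚ}
    (ht : t ≤ i) : positiveWord l • t = t := by
  induction l generalizing i with
  | nil => simp
  | cons j l ih =>
    obtain ⟨hij, hl⟩ := List.isChain_cons_cons.mp hl
    have htj : t ≤ j := ht.trans (by exact_mod_cast hij)
    rw [positiveWord_cons, mul_smul, ih hl htj, x_smul_of_le htj]

lemma positiveWord_cons_smul_lt {i : ℕ} {l : List ℕ} {t : ℚ} (hl : (i :: l).IsChain (· ≤ ·))
    (ht : i < t) : positiveWord (i :: l) • t < t := by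
  have hi : (i : ℚ) < positiveWord l • t := by
    rw [← positiveWord_smul_of_le hl le_rfl]
    exact smul_strictMono_right _ ht
  rw [positiveWord_cons, mul_smul]
  exact (x_smul_lt hi).trans_le (positiveWord_smul_le l t)

lemma positiveWord_cons_smul_eq_iff {i : ℕ} {l : List ℕ} (hl : (i :: l).IsChain (· ≤ ·)) {t : ℚ} :
    positiveWord (i :: l) • t = t ↔ t ≤ i := by
  refine ⟨fun h ↦ ?_, fun h ↦ ?_⟩
  · by_contra! ht
    exact (positiveWord_cons_smul_lt hl ht).ne h
  · rw [positiveWord_cons, mul_smul, positiveWord_smul_of_le hl h, x_smul_of_le h]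

-- The first letter of a nondecreasing word is read off its fixed points, the half-line up to it.
lemma eq_of_isChain_of_positiveWord_smul_eq {l m : List ℕ} (hl : l.IsChain (· ≤ ·))
    (hm : m.IsChain (· ≤ ·)) (h : ∀ t : ℚ, positiveWord l • t = positiveWord m • t) : l = m := by
  induction l generalizing m with
  | nil =>
    cases m with
    | nil => rfl
    | cons j m =>
      have hlt := positiveWord_cons_smul_lt hm (lt_add_one (j : ℚ))
      rw [← h, positiveWord_nil, one_smul] at hlt
      exact absurd hlt (lt_irrefl _)
  | cons i l ih =>
    cases m with
    | nil =>
      have hlt := positiveWord_cons_smul_lt hl (lt_add_one (i : ℚ))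
      rw [h, positiveWord_nil, one_smul] at hlt
      exact absurd hlt (lt_irrefl _)
    | cons j m =>
      have hfix : ∀ t : ℚ, t ≤ i ↔ t ≤ j := fun t ↦ by
        rw [← positiveWord_cons_smul_eq_iff hl, ← positiveWord_cons_smul_eq_iff hm, h]
      obtain rfl : i = j := by exact_mod_cast eq_of_forall_le_iff hfix
      refine congrArg (i :: ·) (ih hl.tail hm.tail fun t ↦ smul_left_cancel (x i) ?_)
      simpa only [positiveWord_cons, mul_smul] using h t

lemma exists_inv_x_mul_positiveWord_eq (i : ℕ) (l : List ℕ) :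
    ∃ m r, (x i)⁻¹ * positiveWord l = positiveWord m * (positiveWord r)⁻¹ := by
  induction l generalizing i with
  | nil => exact ⟨[], [i], by simp⟩
  | cons n l ih =>
    rcases lt_trichotomy i n with h | rfl | h
    · obtain ⟨m, r, hmr⟩ := ih i
      refine ⟨(n + 1) :: m, r, ?_⟩
      rw [positiveWord_cons, positiveWord_cons, mul_assoc, ← hmr, inv_mul_eq_iff_eq_mul,
        ← mul_assoc, ← mul_assoc, ← x_mul_x h]
      group
    · exact ⟨l, [], by simp⟩
    · obtain ⟨m, r, hmr⟩ := ih (i + 1)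
      refine ⟨n :: m, r, ?_⟩
      rw [positiveWord_cons, positiveWord_cons, mul_assoc, ← hmr, inv_mul_eq_iff_eq_mul,
        ← mul_assoc, ← mul_assoc, x_mul_x h]
      group

lemma exists_eq_positiveWord_mul_inv (g : ThompsonF) :
    ∃ l m, g = positiveWord l * (positiveWord m)⁻¹ := by
  have hg : g ∈ Subgroup.closure (range x) := closure_range_x ▸ Subgroup.mem_top g
  induction hg using Subgroup.closure_induction_left with
  | one => exact ⟨[], [], by simp⟩
  | mul_left _ hy g _ ih =>
    obtain ⟨i, rfl⟩ := hy
    obtain ⟨l, m, rfl⟩ := ih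
    exact ⟨i :: l, m, by rw [positiveWord_cons, mul_assoc]⟩
  | inv_mul_cancel _ hy g _ ih =>
    obtain ⟨i, rfl⟩ := hy
    obtain ⟨l, m, rfl⟩ := ih
    obtain ⟨l', r, hr⟩ := exists_inv_x_mul_positiveWord_eq i l
    refine ⟨l', m ++ r, ?_⟩
    rw [← mul_assoc, hr, positiveWord_append, mul_inv_rev, mul_assoc]

instance : FaithfulSMul ThompsonF ℚ where
  eq_of_smul_eq_smul {g h} hgh := by
    obtain ⟨l, m, hlm⟩ := exists_eq_positiveWord_mul_inv (h⁻¹ * g)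
    obtain ⟨l', hl', hword_l⟩ := exists_isChain_positiveWord_eq l
    obtain ⟨m', hm', hword_m⟩ := exists_isChain_positiveWord_eq m
    have hsmul : ∀ t : ℚ, positiveWord l' • t = positiveWord m' • t := fun t ↦ by
      rw [hword_l, hword_m, ← inv_mul_cancel_right (positiveWord l) (positiveWord m), ← hlm,
        mul_smul, mul_smul, hgh, inv_smul_smul]
    have hl'm' := eq_of_isChain_of_positiveWord_smul_eq hl' hm' hsmul
    rw [← hword_l, ← hword_m, hl'm', mul_inv_cancel, inv_mul_eq_one] at hlm
    exact hlm.symm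

end Faithful

section CompactSupport

/-- The elements supported in a compact subinterval of `(0, ∞)`, the half-line on which Thompson's
group acts without global fixed points. -/
def compactlySupported : Subgroup ThompsonF where
  carrier := {g | ∃ a b : ℚ, 0 < a ∧ g ∈ rigidStabilizer ThompsonF (Ioo a b)}
  one_mem' := ⟨1, 1, one_pos, one_mem _⟩
  mul_mem' := by
    rintro g h ⟨a, b, ha, hg⟩ ⟨a', b', ha', hh⟩
    exact ⟨min a a', max b b', lt_min ha ha', mul_mem
      (rigidStabilizer_mono (Ioo_subset_Ioo (min_le_left _ _) (le_max_left _ _)) hg)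
      (rigidStabilizer_mono (Ioo_subset_Ioo (min_le_right _ _) (le_max_right _ _)) hh)⟩
  inv_mem' := by
    rintro g ⟨a, b, ha, hg⟩
    exact ⟨a, b, ha, inv_mem hg⟩

instance : compactlySupported.Normal where
  conj_mem := by
    rintro g ⟨a, b, ha, hg⟩ k
    exact ⟨k • a, k • b, smul_pos k ha, smul_Ioo k a b ▸ conj_mem_rigidStabilizer k hg⟩

lemma commutator_le_compactlySupported : commutator ThompsonF ≤ compactlySupported := by
  refine commutator_le_of_inv_mul_succ_mem fun j ↦
    ⟨j + 1, j + 4, by positivity, mem_rigidStabilizer_iff.mpr fun t ht ↦ ?_⟩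
  rw [mem_Ioo, not_and_or, not_lt, not_lt] at ht
  rw [mul_smul, inv_smul_eq_iff, x_smul, x_smul]
  push_cast
  rcases ht with h | h <;> split_ifs <;> linarith

end CompactSupport

section Compression

lemma exists_lt_inv_x_pow_smul {i : ℕ} {s : ℚ} (hs : i < s) (t : ℚ) :
    ∃ n : ℕ, t < ((x i)⁻¹ ^ n) • s := by
  set δ := min (s - i) 1
  have hδ : 0 < δ := lt_min (sub_pos.mpr hs) one_pos
  have hstep : ∀ u, s ≤ u → u + δ ≤ (x i)⁻¹ • u := fun u hu ↦ by
    have := min_le_left (s - i) 1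
    have := min_le_right (s - i) 1
    rw [x_inv_smul]
    split_ifs <;> linarith
  have hgrow : ∀ n : ℕ, s + n * δ ≤ ((x i)⁻¹ ^ n) • s := fun n ↦ by
    induction n with
    | zero => simp
    | succ n ih =>
      have hn : 0 ≤ n * δ := by positivity
      rw [pow_succ', mul_smul]
      push_cast
      linarith [hstep _ (by linarith : s ≤ ((x i)⁻¹ ^ n) • s)]
  obtain ⟨n, hn⟩ := exists_nat_gt ((t - s) / δ)
  rw [div_lt_iff₀ hδ] at hn
  exact ⟨n, by linarith [hgrow n]⟩

lemma exists_smul_natCast_mem_Ico {c d : ℚ} (hc : 0 ≤ c) (hcd : c < d) :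
    ∃ (g : ThompsonF) (i : ℕ), g • (i : ℚ) ∈ Ico c d := by
  obtain ⟨m, hm⟩ : ∃ m : ℕ, 1 ≤ 2 ^ m * (d - c) := by
    obtain ⟨m, hm⟩ := pow_unbounded_of_one_lt (1 / (d - c)) one_lt_two
    exact ⟨m, (div_le_iff₀ (sub_pos.mpr hcd)).mp hm.le⟩
  induction m generalizing c d with
  | zero => exact ⟨1, ⌈c⌉₊, by
      rw [one_smul]
      exact ⟨Nat.le_ceil c, by linarith [Nat.ceil_lt_add_one hc]⟩⟩
  | succ m ih =>
    by_cases hceil : (⌈c⌉₊ : ℚ) < d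
    · exact ⟨1, ⌈c⌉₊, by rw [one_smul]; exact ⟨Nat.le_ceil c, hceil⟩⟩
    · -- Without a natural number in it, `[c, d)` lies in `[⌊c⌋, ⌊c⌋ + 1]`, which `x_⌊c⌋⁻¹`
      -- stretches by a factor of `2`.
      set i := ⌊c⌋₊
      have hci : i ≤ c := Nat.floor_le hc
      have hdi : d ≤ i + 1 :=
        (not_lt.mp hceil).trans (by exact_mod_cast Nat.ceil_le_floor_add_one c)
      have hexpand : ∀ t : ℚ, i ≤ t → t ≤ i + 1 → (x i)⁻¹ • t = 2 * t - i := fun t h h' ↦ by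
        rw [x_inv_smul]
        split_ifs <;> linarith
      obtain ⟨g, k, hgk⟩ := ih (c := 2 * c - i) (d := 2 * d - i) (by linarith) (by linarith)
        (by rw [pow_succ] at hm; linarith)
      rw [← hexpand c hci (by linarith), ← hexpand d (by linarith) hdi] at hgk
      refine ⟨x i * g, k, ?_⟩
      rw [mul_smul, mem_Ico, ← (smul_strictMono_right (x i)⁻¹).le_iff_le,
        ← (smul_strictMono_right (x i)⁻¹).lt_iff_lt, inv_smul_smul]
      exact hgk

lemma exists_lt_smul_smul_lt {a c d : ℚ} (ha : 0 < a) (b : ℚ) (hc : 0 ≤ c) (hcd : c < d) :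
    ∃ g : ThompsonF, c < g • a ∧ g • b < d := by
  obtain ⟨g, i, hci, hid⟩ := exists_smul_natCast_mem_Ico hc hcd
  obtain ⟨m, hm⟩ := exists_lt_inv_x_pow_smul (i := 0) (by exact_mod_cast ha) (i : ℚ)
  have hi : (i : ℚ) < g⁻¹ • d := by
    rw [← (smul_strictMono_right g).lt_iff_lt, smul_inv_smul]
    exact hid
  obtain ⟨n, hn⟩ := exists_lt_inv_x_pow_smul hi (((x 0)⁻¹ ^ m) • b)
  have hfix : x i ^ n • (i : ℚ) = i :=
    (stabilizer ThompsonF (i : ℚ)).pow_mem (x_smul_of_le le_rfl) n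
  refine ⟨g * x i ^ n * (x 0)⁻¹ ^ m, ?_, ?_⟩
  · calc c ≤ g • (i : ℚ) := hci
      _ = (g * x i ^ n) • (i : ℚ) := by rw [mul_smul, hfix]
      _ < (g * x i ^ n) • (x 0)⁻¹ ^ m • a := smul_strictMono_right _ hm
      _ = (g * x i ^ n * (x 0)⁻¹ ^ m) • a := (mul_smul _ _ _).symm
  · calc (g * x i ^ n * (x 0)⁻¹ ^ m) • b = (g * x i ^ n) • (x 0)⁻¹ ^ m • b := mul_smul _ _ _
      _ < (g * x i ^ n) • (x i)⁻¹ ^ n • g⁻¹ • d := smul_strictMono_right _ hn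
      _ = d := by rw [inv_pow, mul_smul, smul_inv_smul, smul_inv_smul]

lemma x_succ_mem_of_commutator_le {S : Subgroup ThompsonF} (hS : commutator ThompsonF ≤ S)
    {j n : ℕ} (h : x (j + 1 + n) ∈ S) : x (j + 1) ∈ S := by
  induction n with
  | zero => exact h
  | succ n ih =>
    have hdiff := hS (inv_mul_succ_mem_commutator (j + n))
    rw [show j + n + 1 = j + 1 + n by lia, show j + n + 2 = j + 1 + (n + 1) by lia] at hdiff
    exact ih (inv_mem_iff.mp ((S.mul_mem_cancel_right h).mp hdiff))

lemma commutator_sup_fixingSubgroup_Icc {a : ℚ} (ha : 0 < a) (b : ℚ) :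
    commutator ThompsonF ⊔ fixingSubgroup ThompsonF (Icc a b) = ⊤ := by
  set S := commutator ThompsonF ⊔ fixingSubgroup ThompsonF (Icc a b)
  have hS : commutator ThompsonF ≤ S := le_sup_left
  have hsucc : ∀ j, x (j + 1) ∈ S := fun j ↦ by
    obtain ⟨n, hn⟩ := exists_nat_ge b
    refine x_succ_mem_of_commutator_le hS (n := n) <| Subgroup.mem_sup_right <|
      (mem_fixingSubgroup_iff _).mpr fun t ht ↦ x_smul_of_le <| (ht.2.trans hn).trans ?_
    exact_mod_cast Nat.le_add_left n (j + 1)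
  have hzero : x 0 ∈ S := by
    -- `x₀ x₁⁻¹` fixes `[2, ∞)`, so its conjugate by a large power of `x₀` fixes `[a, ∞)`.
    obtain ⟨m, hm⟩ := exists_lt_inv_x_pow_smul (i := 0) (by exact_mod_cast ha) 2
    have hconj : x 0 ^ m * (x 0 * (x 1)⁻¹ * (x 0 ^ m)⁻¹) ∈ S := by
      refine Subgroup.mem_sup_right <| (mem_fixingSubgroup_iff _).mpr fun t ht ↦ ?_
      have ht' : 2 < (x 0 ^ m)⁻¹ • t := by
        rw [← inv_pow]
        exact hm.trans_le (smul_mono_right _ ht.1)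
      rw [mul_smul, mul_smul, mul_smul, smul_eq_iff_eq_inv_smul, x_inv_smul, x_smul]
      push_cast
      split_ifs <;> linarith
    rw [(Subgroup.Normal.of_commutator_le _ hS).mem_comm_iff, inv_mul_cancel_right] at hconj
    exact (S.mul_mem_cancel_right (inv_mem (hsucc 0))).mp hconj
  rw [← top_le_iff, ← closure_range_x, Subgroup.closure_le]
  rintro _ ⟨_ | j, rfl⟩
  exacts [hzero, hsucc j]

lemma exists_mem_commutator_smul_eq {a : ℚ} (ha : 0 < a) (b : ℚ) (h : ThompsonF) :
    ∃ f ∈ commutator ThompsonF, ∀ t ∈ Icc a b, f • t = h • t := by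
  have hh : h ∈ commutator ThompsonF ⊔ fixingSubgroup ThompsonF (Icc a b) :=
    commutator_sup_fixingSubgroup_Icc ha b ▸ Subgroup.mem_top h
  obtain ⟨f, hf, k, hk, rfl⟩ := Subgroup.mem_sup_of_normal_left.mp hh
  exact ⟨f, hf, fun t ht ↦ by rw [mul_smul, (mem_fixingSubgroup_iff _).mp hk t ht]⟩

lemma exists_mem_commutator_smul_Ioo_subset {a c d : ℚ} (ha : 0 < a) (b : ℚ) (hc : 0 ≤ c)
    (hcd : c < d) : ∃ f ∈ commutator ThompsonF, f • Ioo a b ⊆ Ioo c d := by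
  rcases le_or_gt b a with hba | hab
  · exact ⟨1, one_mem _, by simp [Ioo_eq_empty hba.not_gt]⟩
  obtain ⟨g, hca, hbd⟩ := exists_lt_smul_smul_lt ha b hc hcd
  obtain ⟨f, hf, hfg⟩ := exists_mem_commutator_smul_eq ha b g
  refine ⟨f, hf, ?_⟩
  rw [smul_Ioo, hfg a (left_mem_Icc.mpr hab.le), hfg b (right_mem_Icc.mpr hab.le)]
  exact Ioo_subset_Ioo hca.le hbd.le

lemma exists_conj_mem_rigidStabilizer_Ioo {f g : ThompsonF} (hf : f ∈ compactlySupported)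
    (hg : g ∈ compactlySupported) {c d : ℚ} (hc : 0 ≤ c) (hcd : c < d) :
    ∃ k ∈ commutator ThompsonF, k * f * k⁻¹ ∈ rigidStabilizer ThompsonF (Ioo c d) ∧
      k * g * k⁻¹ ∈ rigidStabilizer ThompsonF (Ioo c d) := by
  obtain ⟨a, b, ha, hf⟩ := hf
  obtain ⟨a', b', ha', hg⟩ := hg
  obtain ⟨k, hk, hsub⟩ :=
    exists_mem_commutator_smul_Ioo_subset (lt_min ha ha') (max b b') hc hcd
  have hab : Ioo a b ⊆ Ioo (min a a') (max b b') :=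
    Ioo_subset_Ioo (min_le_left _ _) (le_max_left _ _)
  have hab' : Ioo a' b' ⊆ Ioo (min a a') (max b b') :=
    Ioo_subset_Ioo (min_le_right _ _) (le_max_right _ _)
  exact ⟨k, hk,
    rigidStabilizer_mono hsub (conj_mem_rigidStabilizer k (rigidStabilizer_mono hab hf)),
    rigidStabilizer_mono hsub (conj_mem_rigidStabilizer k (rigidStabilizer_mono hab' hg))⟩

end Compression

lemma exists_disjoint_smul_Ioo {n : ThompsonF} (hn : n ≠ 1) :
    ∃ c d : ℚ, 0 ≤ c ∧ c < d ∧ Disjoint (n • Ioo c d) (Ioo c d) := by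
  obtain ⟨t, ht⟩ : ∃ t : ℚ, n • t ≠ t := by
    by_contra! h
    exact hn (eq_of_smul_eq_smul fun t : ℚ ↦ (h t).trans (one_smul _ t).symm)
  have hpos : 0 < t := not_le.mp (ht ∘ smul_of_nonpos n)
  exact ⟨t ⊓ n • t, t ⊔ n • t, le_inf hpos.le (smul_pos n hpos).le, inf_lt_sup.mpr ht.symm,
    disjoint_smul_uIoo n t⟩

lemma nontrivial_commutator : Nontrivial (commutator ThompsonF) := by
  refine (Subgroup.nontrivial_iff_exists_ne_one _).mpr
    ⟨_, inv_mul_succ_mem_commutator 0, fun h ↦ ?_⟩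
  have h2 : x 1 • (2 : ℚ) = x 2 • (2 : ℚ) := by rw [inv_mul_eq_one.mp h]
  norm_num [x_smul] at h2

end ThompsonF

/-- The commutator subgroup of Thompson's group `F` is a simple group. -/
theorem thompsonF_commutator_simple : IsSimpleGroup (commutator ThompsonF) := by
  have := ThompsonF.nontrivial_commutator
  have := ThompsonF.isPerfect_commutator
  refine isSimpleGroup_of_forall_exists_disjoint_smul (α := ℚ) fun n hn f g ↦ ?_
  obtain ⟨c, d, hc, hcd, hdisj⟩ := ThompsonF.exists_disjoint_smul_Ioo (Subtype.coe_ne_coe.mpr hn)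
  obtain ⟨k, hk, hkf, hkg⟩ := ThompsonF.exists_conj_mem_rigidStabilizer_Ioo
    (ThompsonF.commutator_le_compactlySupported f.2)
    (ThompsonF.commutator_le_compactlySupported g.2) hc hcd
  exact ⟨⟨k, hk⟩, Ioo c d, hdisj, mem_rigidStabilizer_iff.mpr (mem_rigidStabilizer_iff.mp hkf),
    mem_rigidStabilizer_iff.mpr (mem_rigidStabilizer_iff.mp hkg)⟩
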